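/- arXiv:2302.03363 — 2 statements merged into one kernel-verified Lean document; each statement's English description precedes it below -/
import Mathlib

section
/- Let α, β, γ be real numbers with α > -1/2, γ > -1, α + β + γ > -3/2, let θ > 0 and fix s > 0. For T > s define K(T) = e^{−θT} ∫₀ˢ r^{2α} (∫ᵣˢ u^β (u−r)^γ du) (∫ᵣᵀ e^{θt} t^β (t−r)^γ dt) dr. Then lim_{T→+∞} T^{−(β+γ)} K(T) = B(2α+1, γ+1) s^{2α+β+γ+2} / (θ (2α+β+γ+2)), where B(a,b) = Γ(a)Γ(b)/Γ(a+b) is the Beta function. -/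
open MeasureTheory Filter intervalIntegral

theorem intervalIntegrable_rpow_mul_sub_rpow {β γ r b : ℝ} (hγ : -1 < γ) (hr : 0 < r)
    (hrb : r ≤ b) : IntervalIntegrable (fun u => u ^ β * (u - r) ^ γ) volume r b := by
  have h : IntervalIntegrable (fun u => (u - r) ^ γ) volume r b := by
    simpa using (intervalIntegrable_rpow' (a := 0) (b := b - r) hγ).comp_sub_right r
  refine h.continuousOn_mul ?_
  rw [Set.uIcc_of_le hrb]
  exact fun u hu => (Real.continuousAt_rpow_const _ _ (.inl (hr.trans_le hu.1).ne')).continuousWithinAt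

theorem intervalIntegrable_exp_mul_rpow_mul_sub_rpow {β γ θ r b : ℝ} (hγ : -1 < γ) (hr : 0 < r)
    (hrb : r ≤ b) :
    IntervalIntegrable (fun t => Real.exp (θ * t) * t ^ β * (t - r) ^ γ) volume r b := by
  simp_rw [mul_assoc]
  exact (intervalIntegrable_rpow_mul_sub_rpow hγ hr hrb).continuousOn_mul (by fun_prop)

theorem integral_sub_rpow {γ r b : ℝ} (hγ : -1 < γ) :
    ∫ u in r..b, (u - r) ^ γ = (b - r) ^ (γ + 1) / (γ + 1) := by
  rw [intervalIntegral.integral_comp_sub_right (· ^ γ), integral_rpow (.inl hγ), sub_self,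
    Real.zero_rpow (by linarith), sub_zero]

theorem integral_rpow_mul_sub_rpow_nonneg {β γ r b : ℝ} (hr : 0 ≤ r) (hrb : r ≤ b) :
    0 ≤ ∫ u in r..b, u ^ β * (u - r) ^ γ :=
  integral_nonneg hrb fun _ hu =>
    mul_nonneg (Real.rpow_nonneg (hr.trans hu.1) _) (Real.rpow_nonneg (sub_nonneg.2 hu.1) _)

theorem exists_integral_rpow_mul_sub_rpow_le {β γ b : ℝ} (hγ : -1 < γ) (hβγ : -1 < β + γ)
    (hb : 0 < b) :
    ∃ C, ∀ r ∈ Set.Ioo 0 b, ∫ u in r..b, u ^ β * (u - r) ^ γ ≤ C := by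
  rcases le_total β 0 with hβ | hβ
  · refine ⟨b ^ (β + γ + 1) / (β + γ + 1), fun r hr => ?_⟩
    calc ∫ u in r..b, u ^ β * (u - r) ^ γ ≤ ∫ u in r..b, (u - r) ^ (β + γ) := by
          refine integral_mono_on_of_le_Ioo hr.2.le
            (intervalIntegrable_rpow_mul_sub_rpow hγ hr.1 hr.2.le) ?_ fun u hu => ?_
          · simpa using (intervalIntegrable_rpow' (a := 0) (b := b - r) hβγ).comp_sub_right r
          · have hu' : 0 < u - r := sub_pos.2 hu.1
            rw [Real.rpow_add hu']
            exact mul_le_mul_of_nonneg_right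
              (Real.rpow_le_rpow_of_nonpos hu' (by linarith [hr.1]) hβ) (Real.rpow_nonneg hu'.le _)
      _ = (b - r) ^ (β + γ + 1) / (β + γ + 1) := integral_sub_rpow hβγ
      _ ≤ b ^ (β + γ + 1) / (β + γ + 1) := by
          have h : 0 < β + γ + 1 := by linarith
          gcongr
          · linarith [hr.2]
          · linarith [hr.1]
  · refine ⟨b ^ β * (b ^ (γ + 1) / (γ + 1)), fun r hr => ?_⟩
    have h : 0 < γ + 1 := by linarith
    calc ∫ u in r..b, u ^ β * (u - r) ^ γ ≤ ∫ u in r..b, b ^ β * (u - r) ^ γ := by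
          refine integral_mono_on_of_le_Ioo hr.2.le
            (intervalIntegrable_rpow_mul_sub_rpow hγ hr.1 hr.2.le) ?_ fun u hu => ?_
          · simpa using
              ((intervalIntegrable_rpow' (a := 0) (b := b - r) hγ).comp_sub_right r).const_mul _
          · have hu' : 0 < u - r := sub_pos.2 hu.1
            exact mul_le_mul_of_nonneg_right
              (Real.rpow_le_rpow (hr.1.trans hu.1).le hu.2.le hβ) (Real.rpow_nonneg hu'.le _)
      _ = b ^ β * ((b - r) ^ (γ + 1) / (γ + 1)) := by
          rw [intervalIntegral.integral_const_mul, integral_sub_rpow hγ]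
      _ ≤ _ := by
          gcongr
          · linarith [hr.2]
          · linarith [hr.1]

theorem exists_integral_rpow_mul_sub_rpow_le_rpow {β γ p b : ℝ} (hγ : -1 < γ) (hp : 0 ≤ p)
    (hβγ : -1 < β + p + γ) (hb : 0 < b) :
    ∃ C, ∀ r ∈ Set.Ioo 0 b, ∫ u in r..b, u ^ β * (u - r) ^ γ ≤ C * r ^ (-p) := by
  obtain ⟨C, hC⟩ := exists_integral_rpow_mul_sub_rpow_le hγ hβγ hb
  refine ⟨C, fun r hr => ?_⟩
  calc ∫ u in r..b, u ^ β * (u - r) ^ γ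
      ≤ ∫ u in r..b, r ^ (-p) * (u ^ (β + p) * (u - r) ^ γ) := by
        refine integral_mono_on_of_le_Ioo hr.2.le
          (intervalIntegrable_rpow_mul_sub_rpow hγ hr.1 hr.2.le)
          ((intervalIntegrable_rpow_mul_sub_rpow hγ hr.1 hr.2.le).const_mul _) fun u hu => ?_
        have hu0 : 0 < u := hr.1.trans hu.1
        have h : u ^ β = u ^ (-p) * u ^ (β + p) := by
          rw [← Real.rpow_add hu0]; congr 1; ring
        rw [h, mul_assoc]
        refine mul_le_mul_of_nonneg_right
          (Real.rpow_le_rpow_of_nonpos hr.1 hu.1.le (by linarith)) ?_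
        exact mul_nonneg (Real.rpow_nonneg hu0.le _) (Real.rpow_nonneg (sub_nonneg.2 hu.1.le) _)
    _ = r ^ (-p) * ∫ u in r..b, u ^ (β + p) * (u - r) ^ γ :=
        intervalIntegral.integral_const_mul _ _
    _ ≤ C * r ^ (-p) := by
        rw [mul_comm]
        exact mul_le_mul_of_nonneg_right (hC r hr) (Real.rpow_nonneg hr.1.le _)
theorem integral_rpow_mul_const_sub_rpow {a b u : ℝ} (ha : -1 < a) (hb : -1 < b) (hu : 0 < u) :
    ∫ r in (0:ℝ)..u, r ^ a * (u - r) ^ b =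
      u ^ (a + b + 1) * ProbabilityTheory.beta (a + 1) (b + 1) := by
  have h := Complex.betaIntegral_scaled ((a + 1 : ℝ) : ℂ) ((b + 1 : ℝ) : ℂ) hu
  rw [Complex.betaIntegral_eq_Gamma_mul_div _ _ (by simp; linarith) (by simp; linarith)] at h
  rw [ProbabilityTheory.beta, ← Complex.ofReal_inj, ← intervalIntegral.integral_ofReal]
  simp only [← Complex.ofReal_add, Complex.Gamma_ofReal] at h
  rw [intervalIntegral.integral_congr (g := fun x : ℝ =>
    (x:ℂ) ^ (((a + 1 : ℝ) : ℂ) - 1) * ((u:ℂ) - x) ^ (((b + 1 : ℝ) : ℂ) - 1)), h]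
  · push_cast
    rw [Complex.ofReal_cpow hu.le]
    congr 2
    push_cast; ring
  · intro r hr
    rw [Set.uIcc_of_le hu.le] at hr
    simp only [Complex.ofReal_mul]
    rw [Complex.ofReal_cpow hr.1, Complex.ofReal_cpow (by linarith [hr.2])]
    push_cast
    simp

theorem intervalIntegrable_rpow_mul_const_sub_rpow {a b u : ℝ} (ha : -1 < a) (hb : -1 < b)
    (hu : 0 < u) : IntervalIntegrable (fun r => r ^ a * (u - r) ^ b) volume 0 u := by
  have h1 : IntervalIntegrable (fun r => r ^ a * (u - r) ^ b) volume 0 (u / 2) := by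
    refine (intervalIntegrable_rpow' ha).mul_continuousOn fun r hr => ?_
    rw [Set.uIcc_of_le (by linarith)] at hr
    exact ((continuousAt_const.sub continuousAt_id).rpow_const
      (.inl (by simp; linarith [hr.2]))).continuousWithinAt
  have h2 : IntervalIntegrable (fun r => r ^ a * (u - r) ^ b) volume (u / 2) u := by
    have h : IntervalIntegrable (fun r => (u - r) ^ b) volume (u / 2) u := by
      simpa [sub_half] using
        ((intervalIntegrable_rpow' (a := 0) (b := u / 2) hb).comp_sub_left u).symm
    refine h.continuousOn_mul fun r hr => ?_
    rw [Set.uIcc_of_le (by linarith)] at hr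
    exact (Real.continuousAt_rpow_const _ _ (.inl (by linarith [hr.1]))).continuousWithinAt
  exact h1.trans h2

theorem integral_rpow_mul_integral_rpow_mul_sub_rpow {a β γ s : ℝ} (ha : -1 < a) (hγ : -1 < γ)
    (h : -2 < a + β + γ) (hs : 0 < s) :
    ∫ r in (0:ℝ)..s, r ^ a * ∫ u in r..s, u ^ β * (u - r) ^ γ =
      ProbabilityTheory.beta (a + 1) (γ + 1) * s ^ (a + β + γ + 2) / (a + β + γ + 2) := by
  set B := ProbabilityTheory.beta (a + 1) (γ + 1) with hB
  set μ := volume.restrict (Set.Ioc 0 s) with hμ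
  set f : ℝ → ℝ → ℝ := fun r u =>
    {q : ℝ × ℝ | q.1 < q.2}.indicator (fun q => q.2 ^ β * (q.1 ^ a * (q.2 - q.1) ^ γ)) (r, u) with hf
  have hmeas : AEStronglyMeasurable (Function.uncurry f) (μ.prod μ) := by
    refine Measurable.aestronglyMeasurable ?_
    refine Measurable.indicator (by fun_prop) (measurableSet_lt measurable_fst measurable_snd)
  have hsec : ∀ u ∈ Set.Ioc 0 s, (fun r => f r u) =
      (Set.Iio u).indicator fun r => u ^ β * (r ^ a * (u - r) ^ γ) := by
    intro u hu; ext r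
    simp [hf, Set.indicator_apply]
  have hset : ∀ u ∈ Set.Ioc 0 s, Set.Iio u ∩ Set.Ioc 0 s = Set.Ioo 0 u := by
    intro u hu; ext r
    simp only [Set.mem_inter_iff, Set.mem_Iio, Set.mem_Ioc, Set.mem_Ioo]
    constructor
    · rintro ⟨h1, h2, h3⟩; exact ⟨h2, h1⟩
    · rintro ⟨h1, h2⟩; exact ⟨h2, h1, by linarith [hu.2]⟩
  have hint : ∀ u ∈ Set.Ioc 0 s, ∫ r, f r u ∂μ = B * u ^ (a + β + γ + 1) := by
    intro u hu
    rw [hsec u hu, MeasureTheory.integral_indicator measurableSet_Iio, hμ,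
      Measure.restrict_restrict measurableSet_Iio, hset u hu, ← integral_Ioc_eq_integral_Ioo,
      ← intervalIntegral.integral_of_le hu.1.le, intervalIntegral.integral_const_mul,
      integral_rpow_mul_const_sub_rpow ha hγ hu.1, ← mul_assoc, ← Real.rpow_add hu.1, mul_comm]
    congr 2; ring
  have hnn : ∀ r ∈ Set.Ioc 0 s, ∀ u, 0 ≤ f r u := by
    intro r hr u
    refine Set.indicator_apply_nonneg fun hru => ?_
    have hru : r < u := hru
    have := hr.1
    have : 0 ≤ u - r := by linarith
    have : 0 ≤ u := by linarith [hr.1]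
    have := hr.1.le
    positivity
  have hInt : Integrable (Function.uncurry f) (μ.prod μ) := by
    rw [integrable_prod_iff' hmeas]
    constructor
    · refine ae_restrict_of_forall_mem measurableSet_Ioc fun u hu => ?_
      simp only [Function.uncurry_apply_pair]
      rw [hsec u hu, integrable_indicator_iff measurableSet_Iio, IntegrableOn, hμ,
        Measure.restrict_restrict measurableSet_Iio, hset u hu]
      refine IntegrableOn.mono_set ?_ Set.Ioo_subset_Ioc_self
      exact (intervalIntegrable_iff_integrableOn_Ioc_of_le hu.1.le).1
        ((intervalIntegrable_rpow_mul_const_sub_rpow ha hγ hu.1).const_mul _)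
    · have : IntegrableOn (fun u => B * u ^ (a + β + γ + 1)) (Set.Ioc 0 s) :=
        (intervalIntegrable_iff_integrableOn_Ioc_of_le hs.le).1
          ((intervalIntegrable_rpow' (by linarith)).const_mul _)
      refine this.congr (ae_restrict_of_forall_mem measurableSet_Ioc fun u hu => ?_)
      refine (hint u hu).symm.trans ?_
      refine integral_congr_ae (ae_restrict_of_forall_mem measurableSet_Ioc fun r hr => ?_)
      exact (Real.norm_of_nonneg (hnn r hr u)).symm
  have hswap := integral_integral_swap hInt
  have hr : ∀ r ∈ Set.Ioc 0 s, ∫ u, f r u ∂μ = r ^ a * ∫ u in r..s, u ^ β * (u - r) ^ γ := by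
    intro r hr
    have hsec' : (fun u => f r u) =
        (Set.Ioi r).indicator fun u => r ^ a * (u ^ β * (u - r) ^ γ) := by
      ext u
      simp only [hf, Set.indicator_apply, Set.mem_ofPred_eq, Set.mem_Ioi]
      split_ifs <;> ring
    have hset' : Set.Ioi r ∩ Set.Ioc 0 s = Set.Ioc r s := by
      ext u
      simp only [Set.mem_inter_iff, Set.mem_Ioi, Set.mem_Ioc]
      constructor
      · rintro ⟨h1, h2, h3⟩; exact ⟨h1, h3⟩
      · rintro ⟨h1, h2⟩; exact ⟨h1, by linarith [hr.1], h2⟩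
    rw [hsec', MeasureTheory.integral_indicator measurableSet_Ioi, hμ,
      Measure.restrict_restrict measurableSet_Ioi, hset',
      ← intervalIntegral.integral_of_le hr.2, intervalIntegral.integral_const_mul]
  rw [intervalIntegral.integral_of_le hs.le, ← setIntegral_congr_fun measurableSet_Ioc hr, hswap,
    setIntegral_congr_fun measurableSet_Ioc hint, ← intervalIntegral.integral_of_le hs.le,
    intervalIntegral.integral_const_mul, integral_rpow (.inl (by linarith)),
    Real.zero_rpow (by linarith), sub_zero, ← mul_div_assoc]
  ring_nf
theorem sub_div_rpow_le {a δ T v : ℝ} (ha : 0 < a) (hv : 0 ≤ v) (hT : a ≤ T - v) :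
    ((T - v) / T) ^ δ ≤ (1 + v / a) ^ |δ| := by
  have hT0 : 0 < T := by linarith
  have hTv : 0 < T - v := by linarith
  have hva : 0 ≤ v / a := by positivity
  rcases le_total 0 δ with hδ | hδ
  · calc ((T - v) / T) ^ δ ≤ 1 :=
          Real.rpow_le_one (by positivity) ((div_le_one hT0).2 (by linarith)) hδ
      _ ≤ _ := Real.one_le_rpow (by linarith) (abs_nonneg _)
  · rw [abs_of_nonpos hδ, ← inv_div, Real.inv_rpow (by positivity), ← Real.rpow_neg (by positivity)]
    refine Real.rpow_le_rpow (by positivity) ?_ (by linarith)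
    have h : T / (T - v) = 1 + v / (T - v) := by field_simp; ring
    rw [h]
    gcongr

theorem integrableOn_exp_mul_one_add_div_rpow {a θ k : ℝ} (ha : 0 < a) (hθ : 0 < θ)
    (hk : 0 ≤ k) :
    IntegrableOn (fun v => Real.exp (-(θ * v)) * (1 + v / a) ^ k) (Set.Ioi 0) := by
  refine integrable_of_isBigO_exp_neg (half_pos hθ) ?_ ?_
  · refine ContinuousOn.mul (by fun_prop) (ContinuousOn.rpow_const (by fun_prop) fun _ _ => .inr hk)
  · have h1 : Tendsto (fun v : ℝ => 1 + v / a) atTop atTop :=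
      tendsto_atTop_add_const_left _ _ (tendsto_id.atTop_div_const ha)
    have h2 := ((isLittleO_rpow_exp_pos_mul_atTop k (b := a * θ / 2) (by positivity)).comp_tendsto
      h1).isBigO
    have h3 := (Asymptotics.isBigO_refl (fun v => Real.exp (-(θ * v))) atTop).mul h2
    refine h3.trans (Asymptotics.IsBigO.of_bound (Real.exp (a * θ / 2)) (.of_forall fun v => ?_))
    simp only [Function.comp, Real.norm_eq_abs, Real.abs_exp, ← Real.exp_add]
    refine Real.exp_le_exp.2 (le_of_eq ?_)
    field_simp
    ring

theorem tendsto_rpow_neg_mul_exp_mul_integral_exp_mul {a δ θ C : ℝ} {g : ℝ → ℝ} (ha : 0 < a)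
    (hθ : 0 < θ) (hg : Measurable g) (hgC : ∀ t, a ≤ t → |g t| ≤ C * t ^ δ)
    (hg1 : Tendsto (fun t => t ^ (-δ) * g t) atTop (nhds 1)) :
    Tendsto (fun T => T ^ (-δ) * Real.exp (-(θ * T)) * ∫ t in a..T, Real.exp (θ * t) * g t)
      atTop (nhds (1 / θ)) := by
  set F : ℝ → ℝ → ℝ := fun T => (Set.Ioc 0 (T - a)).indicator fun v =>
    Real.exp (-(θ * v)) * (T ^ (-δ) * g (T - v)) with hF
  have hlim : ∫ v in Set.Ioi (0:ℝ), Real.exp (-(θ * v)) = 1 / θ := by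
    have := integral_exp_mul_Ioi (a := -θ) (by linarith) 0
    simpa [neg_mul] using this
  have hC : 0 ≤ C := by
    have h := (abs_nonneg _).trans (hgC a le_rfl)
    exact nonneg_of_mul_nonneg_left h (Real.rpow_pos_of_pos ha _)
  rw [← hlim]
  have key : Tendsto (fun T => ∫ v in Set.Ioi 0, F T v) atTop
      (nhds (∫ v in Set.Ioi (0:ℝ), Real.exp (-(θ * v)))) := by
    refine MeasureTheory.tendsto_integral_filter_of_dominated_convergence
      (fun v => C * (Real.exp (-(θ * v)) * (1 + v / a) ^ |δ|)) ?_ ?_ ?_ ?_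
    · refine .of_forall fun T => (Measurable.indicator ?_ measurableSet_Ioc).aestronglyMeasurable
      fun_prop
    · filter_upwards [eventually_gt_atTop a] with T hT
      refine ae_restrict_of_forall_mem measurableSet_Ioi fun v hv => ?_
      have hv : 0 < v := hv
      have hT0 : 0 < T := by linarith
      by_cases hvT : v ∈ Set.Ioc 0 (T - a)
      · have hTv : a ≤ T - v := by linarith [hvT.2]
        have hTv0 : 0 < T - v := by linarith
        simp only [hF, Set.indicator_of_mem hvT, Real.norm_eq_abs, abs_mul, Real.abs_exp]
        rw [abs_of_pos (Real.rpow_pos_of_pos hT0 _), mul_left_comm C]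
        refine mul_le_mul_of_nonneg_left ?_ (Real.exp_pos _).le
        calc T ^ (-δ) * |g (T - v)| ≤ T ^ (-δ) * (C * (T - v) ^ δ) := by
              gcongr; exact hgC _ hTv
          _ = C * ((T - v) / T) ^ δ := by
              rw [Real.div_rpow hTv0.le hT0.le, Real.rpow_neg hT0.le]; ring
          _ ≤ _ := by gcongr; exact sub_div_rpow_le ha hv.le hTv
      · simp only [hF, Set.indicator_of_notMem hvT, norm_zero]
        positivity
    · exact (integrableOn_exp_mul_one_add_div_rpow ha hθ (abs_nonneg δ)).const_mul C
    · refine ae_restrict_of_forall_mem measurableSet_Ioi fun v hv => ?_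
      have h1 : Tendsto (fun T : ℝ => T - v) atTop atTop :=
        tendsto_atTop_add_const_right _ _ tendsto_id
      have h2 : Tendsto (fun T : ℝ => ((T - v) / T) ^ δ) atTop (nhds 1) := by
        have h : Tendsto (fun T : ℝ => (T - v) / T) atTop (nhds 1) := by
          have : Tendsto (fun T : ℝ => 1 - v / T) atTop (nhds (1 - 0)) :=
            tendsto_const_nhds.sub (tendsto_const_nhds.div_atTop tendsto_id)
          rw [sub_zero] at this
          refine this.congr' ?_
          filter_upwards [eventually_gt_atTop 0] with T hT
          field_simp
        simpa using h.rpow_const (p := δ) (.inl one_ne_zero)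
      have h3 := ((hg1.comp h1).mul h2).const_mul (Real.exp (-(θ * v)))
      rw [mul_one, mul_one] at h3
      refine h3.congr' ?_
      filter_upwards [eventually_ge_atTop (v + a)] with T hT
      have hv : 0 < v := hv
      have hT0 : 0 < T := by linarith
      have hTv0 : 0 < T - v := by linarith
      have hvT : v ∈ Set.Ioc 0 (T - a) := ⟨hv, by linarith⟩
      simp only [hF, Set.indicator_of_mem hvT, Function.comp]
      rw [Real.div_rpow hTv0.le hT0.le, Real.rpow_neg hTv0.le, Real.rpow_neg hT0.le]
      have := (Real.rpow_pos_of_pos hTv0 δ).ne'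
      field_simp
  refine key.congr' ?_
  filter_upwards [eventually_gt_atTop a] with T hT
  rw [setIntegral_indicator measurableSet_Ioc, Set.inter_eq_right.2 fun v hv => hv.1,
    ← intervalIntegral.integral_of_le (by linarith), ← intervalIntegral.integral_const_mul]
  have h := intervalIntegral.integral_comp_sub_left (a := 0) (b := T - a)
    (fun t => T ^ (-δ) * Real.exp (-(θ * T)) * (Real.exp (θ * t) * g t)) T
  rw [sub_sub_cancel, sub_zero] at h
  rw [← h]
  refine intervalIntegral.integral_congr fun v _ => ?_
  have : Real.exp (-(θ * v)) = Real.exp (-(θ * T)) * Real.exp (θ * (T - v)) := by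
    rw [← Real.exp_add]; congr 1; ring
  simp only [this]
  ring

theorem rpow_sub_le_mul_rpow {γ r s t : ℝ} (hr : 0 ≤ r) (hrs : r ≤ s) (hs : 0 < s)
    (ht : 2 * s ≤ t) : (t - r) ^ γ ≤ 2 ^ |γ| * t ^ γ := by
  have htr : 0 < t - r := by linarith
  have ht0 : 0 < t := by linarith
  have h := sub_div_rpow_le (a := t - r) (δ := γ) (T := t) (v := r) htr hr le_rfl
  rw [Real.div_rpow htr.le ht0.le, div_le_iff₀ (Real.rpow_pos_of_pos ht0 _)] at h
  refine h.trans ?_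
  have : r / (t - r) ≤ 1 := (div_le_one htr).2 (by linarith)
  gcongr
  linarith

theorem tendsto_rpow_neg_mul_rpow_mul_sub_rpow (β γ r : ℝ) :
    Tendsto (fun t : ℝ => t ^ (-(β + γ)) * (t ^ β * (t - r) ^ γ)) atTop (nhds 1) := by
  have h : Tendsto (fun t : ℝ => 1 - r / t) atTop (nhds (1 - 0)) :=
    tendsto_const_nhds.sub (tendsto_const_nhds.div_atTop tendsto_id)
  rw [sub_zero] at h
  have h2 := h.rpow_const (p := γ) (.inl one_ne_zero)
  rw [Real.one_rpow] at h2
  refine h2.congr' ?_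
  filter_upwards [eventually_gt_atTop 0, eventually_gt_atTop r] with t ht htr
  have : 1 - r / t = (t - r) / t := by field_simp
  rw [this, Real.div_rpow (by linarith) ht.le, Real.rpow_neg ht.le, Real.rpow_add ht]
  have := (Real.rpow_pos_of_pos ht β).ne'
  field_simp

theorem tendsto_rpow_mul_exp_neg_mul_atTop (k : ℝ) {θ : ℝ} (hθ : 0 < θ) :
    Tendsto (fun T : ℝ => T ^ k * Real.exp (-(θ * T))) atTop (nhds 0) := by
  simpa [neg_mul] using tendsto_rpow_mul_exp_neg_mul_atTop_nhds_zero k θ hθ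

theorem integral_exp_mul_kernel_split {β γ θ r c T : ℝ} (hγ : -1 < γ) (hr : 0 < r) (hrc : r ≤ c)
    (hcT : c ≤ T) :
    ∫ t in r..T, Real.exp (θ * t) * t ^ β * (t - r) ^ γ =
      (∫ t in r..c, Real.exp (θ * t) * t ^ β * (t - r) ^ γ) +
        ∫ t in c..T, Real.exp (θ * t) * (t ^ β * (t - r) ^ γ) := by
  have h := intervalIntegrable_exp_mul_rpow_mul_sub_rpow (β := β) (θ := θ) hγ hr (hrc.trans hcT)
  have h' := h.mono_set (c := c) (d := T) (by
    rw [Set.uIcc_of_le hcT, Set.uIcc_of_le (hrc.trans hcT)]; exact Set.Icc_subset_Icc_left hrc)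
  rw [← integral_add_adjacent_intervals
    (intervalIntegrable_exp_mul_rpow_mul_sub_rpow hγ hr hrc) h']
  simp_rw [mul_assoc]

theorem tendsto_rpow_neg_mul_exp_mul_integral_kernel (β : ℝ) {γ θ r s : ℝ} (hγ : -1 < γ)
    (hθ : 0 < θ) (hr : r ∈ Set.Ioo 0 s) :
    Tendsto (fun T => T ^ (-(β + γ)) * Real.exp (-(θ * T)) *
      ∫ t in r..T, Real.exp (θ * t) * t ^ β * (t - r) ^ γ) atTop (nhds (1 / θ)) := by
  have hs : 0 < s := hr.1.trans hr.2
  have h1 := (tendsto_rpow_mul_exp_neg_mul_atTop (-(β + γ)) hθ).mul_const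
    (∫ t in r..(2 * s), Real.exp (θ * t) * t ^ β * (t - r) ^ γ)
  have h2 := tendsto_rpow_neg_mul_exp_mul_integral_exp_mul (a := 2 * s) (δ := β + γ)
    (C := 2 ^ |γ|) (g := fun t => t ^ β * (t - r) ^ γ) (by linarith) hθ (by fun_prop) ?_
    (tendsto_rpow_neg_mul_rpow_mul_sub_rpow β γ r)
  · have h3 := h1.add h2
    rw [zero_mul, zero_add] at h3
    refine h3.congr' ?_
    filter_upwards [eventually_ge_atTop (2 * s)] with T hT
    rw [integral_exp_mul_kernel_split hγ hr.1 (by linarith [hr.2]) hT, mul_add]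
  · intro t ht
    have ht0 : 0 < t := by linarith
    have htr : 0 < t - r := by linarith [hr.2]
    rw [abs_of_nonneg (by positivity), Real.rpow_add ht0, mul_left_comm]
    exact mul_le_mul_of_nonneg_left (rpow_sub_le_mul_rpow hr.1.le hr.2.le hs ht) (by positivity)

theorem exists_eventually_rpow_neg_mul_exp_mul_integral_kernel_le (β : ℝ) {γ θ s : ℝ}
    (hγ : -1 < γ) (hθ : 0 < θ) (hs : 0 < s) :
    ∃ C, ∀ᶠ T in atTop, ∀ r ∈ Set.Ioo 0 s, T ^ (-(β + γ)) * Real.exp (-(θ * T)) *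
      (∫ t in r..T, Real.exp (θ * t) * t ^ β * (t - r) ^ γ) ≤
        (∫ t in r..(2 * s), t ^ β * (t - r) ^ γ) + C := by
  have hpow : Tendsto (fun T => T ^ (-(β + γ)) * Real.exp (-(θ * T)) *
      ∫ t in (2 * s)..T, Real.exp (θ * t) * t ^ (β + γ)) atTop (nhds (1 / θ)) := by
    refine tendsto_rpow_neg_mul_exp_mul_integral_exp_mul (C := 1) (by linarith) hθ
      (by fun_prop) ?_ ?_
    · intro t ht
      rw [one_mul, abs_of_nonneg (Real.rpow_nonneg (by linarith) _)]
    · simpa using tendsto_rpow_neg_mul_rpow_mul_sub_rpow (β + γ) 0 0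
  have hzero := (tendsto_rpow_mul_exp_neg_mul_atTop (-(β + γ)) hθ).mul_const
    (Real.exp (θ * (2 * s)))
  rw [zero_mul] at hzero
  refine ⟨2 ^ |γ| * (1 / θ + 1), ?_⟩
  filter_upwards [hpow.eventually (eventually_le_nhds (lt_add_one _)),
    hzero.eventually (eventually_le_nhds one_pos), eventually_ge_atTop (2 * s)]
    with T hT1 hT2 hT r hr
  have hrs : r ≤ 2 * s := by linarith [hr.2]
  have hT0 : 0 < T := by linarith
  rw [integral_exp_mul_kernel_split hγ hr.1 hrs hT, mul_add]
  refine add_le_add ?_ ?_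
  · have hle : ∫ t in r..(2 * s), Real.exp (θ * t) * t ^ β * (t - r) ^ γ ≤
        Real.exp (θ * (2 * s)) * ∫ t in r..(2 * s), t ^ β * (t - r) ^ γ := by
      rw [← intervalIntegral.integral_const_mul]
      refine integral_mono_on hrs (intervalIntegrable_exp_mul_rpow_mul_sub_rpow hγ hr.1 hrs)
        ((intervalIntegrable_rpow_mul_sub_rpow hγ hr.1 hrs).const_mul _) fun t ht => ?_
      have ht0 : 0 < t := hr.1.trans_le ht.1
      have htr : 0 ≤ t - r := sub_nonneg.2 ht.1
      rw [mul_assoc]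
      refine mul_le_mul_of_nonneg_right ?_ (by positivity)
      gcongr
      exact ht.2
    refine (mul_le_mul_of_nonneg_left hle (by positivity)).trans ?_
    rw [← mul_assoc]
    exact mul_le_of_le_one_left (integral_rpow_mul_sub_rpow_nonneg hr.1.le hrs) hT2
  · have hle : ∫ t in (2 * s)..T, Real.exp (θ * t) * (t ^ β * (t - r) ^ γ) ≤
        2 ^ |γ| * ∫ t in (2 * s)..T, Real.exp (θ * t) * t ^ (β + γ) := by
      rw [← intervalIntegral.integral_const_mul]
      have hpos : ∀ t ∈ Set.uIcc (2 * s) T, 0 < t ∧ 0 < t - r := by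
        intro t ht
        rw [Set.uIcc_of_le hT] at ht
        constructor <;> linarith [ht.1, hr.2]
      refine integral_mono_on hT (ContinuousOn.intervalIntegrable ?_)
        (ContinuousOn.intervalIntegrable ?_) fun t ht => ?_
      · refine ContinuousOn.mul (by fun_prop) (ContinuousOn.mul ?_ ?_)
        · exact continuousOn_id.rpow_const fun t ht => .inl (hpos t ht).1.ne'
        · exact (continuousOn_id.sub continuousOn_const).rpow_const
            fun t ht => .inl (hpos t ht).2.ne'
      · exact continuousOn_const.mul (ContinuousOn.mul (by fun_prop)
          (continuousOn_id.rpow_const fun t ht => .inl (hpos t ht).1.ne'))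
      · have ht0 : 0 < t := by linarith [ht.1]
        rw [Real.rpow_add ht0, mul_left_comm (2 ^ |γ|), mul_left_comm (2 ^ |γ|)]
        refine mul_le_mul_of_nonneg_left (mul_le_mul_of_nonneg_left ?_ ?_) (Real.exp_pos _).le
        · exact rpow_sub_le_mul_rpow hr.1.le hr.2.le hs ht.1
        · positivity
    refine (mul_le_mul_of_nonneg_left hle (by positivity)).trans ?_
    rw [mul_left_comm]
    exact mul_le_mul_of_nonneg_left hT1 (by positivity)

theorem aestronglyMeasurable_intervalIntegral_of_le {f : ℝ → ℝ → ℝ}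
    (hf : Measurable (Function.uncurry f)) {s b : ℝ} (hsb : s ≤ b) :
    AEStronglyMeasurable (fun r => ∫ u in r..b, f r u) (volume.restrict (Set.Ioo 0 s)) := by
  have hind : Measurable ({q : ℝ × ℝ | q.1 < q.2 ∧ q.2 ≤ b}.indicator (Function.uncurry f)) :=
    hf.indicator ((measurableSet_lt measurable_fst measurable_snd).inter
      (measurableSet_le measurable_snd measurable_const))
  refine (hind.stronglyMeasurable.integral_prod_right' (ν := volume)).aestronglyMeasurable.congr
    (ae_restrict_of_forall_mem measurableSet_Ioo fun r hr => ?_)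
  simp only
  rw [intervalIntegral.integral_of_le (hr.2.le.trans hsb),
    ← MeasureTheory.integral_indicator measurableSet_Ioc]
  rfl

/-- Lemma 4.6: asymptotics of `E(X_s · e^{-θT} ∫₀ᵀ e^{θr} dX_r)` for fixed `s > 0`. -/
theorem stmt_18 (α β γ θ s : ℝ) (hα : -(1/2 : ℝ) < α) (hγ : -1 < γ)
    (hαβγ : -(3/2 : ℝ) < α + β + γ) (hθ : 0 < θ) (hs : 0 < s)
    (K : ℝ → ℝ)
    (hK : ∀ T : ℝ, s < T → K T = Real.exp (-(θ * T)) * ∫ r in (0:ℝ)..s,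
      r ^ (2*α) * (∫ u in r..s, u ^ β * (u - r) ^ γ) *
      (∫ t in r..T, Real.exp (θ * t) * t ^ β * (t - r) ^ γ)) :
    Tendsto (fun T : ℝ => T ^ (-(β + γ)) * K T) atTop
      (nhds ((Real.Gamma (2*α+1) * Real.Gamma (γ+1) / Real.Gamma (2*α+γ+2))
        * s ^ (2*α+β+γ+2) / (θ * (2*α+β+γ+2)))) := by
  obtain ⟨p, hp1, hp2⟩ : ∃ p, max 0 (-(β + γ + 1)) < p ∧ p < α + 1 / 2 :=
    exists_between (max_lt (by linarith) (by linarith))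
  have hp0 : 0 < p := (le_max_left _ _).trans_lt hp1
  have hpβγ : -1 < β + p + γ := by linarith [(le_max_right _ _).trans_lt hp1]
  obtain ⟨C₁, hC₁⟩ := exists_integral_rpow_mul_sub_rpow_le_rpow hγ hp0.le hpβγ hs
  obtain ⟨C₂, hC₂⟩ := exists_integral_rpow_mul_sub_rpow_le_rpow hγ hp0.le hpβγ
    (show 0 < 2 * s by linarith)
  obtain ⟨C₃, hC₃⟩ := exists_eventually_rpow_neg_mul_exp_mul_integral_kernel_le β hγ hθ hs
  have hvalue := integral_rpow_mul_integral_rpow_mul_sub_rpow (a := 2 * α) (β := β) (by linarith) hγ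
    (by rcases le_total (-1) (β + γ) with h | h <;> linarith) hs
  have hconst : Real.Gamma (2*α+1) * Real.Gamma (γ+1) / Real.Gamma (2*α+γ+2)
      * s ^ (2*α+β+γ+2) / (θ * (2*α+β+γ+2)) = ∫ r in Set.Ioo 0 s,
        r ^ (2*α) * (∫ u in r..s, u ^ β * (u - r) ^ γ) * (1 / θ) := by
    rw [MeasureTheory.integral_mul_const, ← integral_Ioc_eq_integral_Ioo,
      ← intervalIntegral.integral_of_le hs.le, hvalue, ProbabilityTheory.beta,
      show 2 * α + 1 + (γ + 1) = 2 * α + γ + 2 by ring, div_mul_div_comm, mul_one, mul_comm θ]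
  rw [hconst]
  have key : Tendsto (fun T => ∫ r in Set.Ioo 0 s,
      r ^ (2*α) * (∫ u in r..s, u ^ β * (u - r) ^ γ) *
        (T ^ (-(β + γ)) * Real.exp (-(θ * T)) *
          ∫ t in r..T, Real.exp (θ * t) * t ^ β * (t - r) ^ γ)) atTop
      (nhds (∫ r in Set.Ioo 0 s,
        r ^ (2*α) * (∫ u in r..s, u ^ β * (u - r) ^ γ) * (1 / θ))) := by
    refine MeasureTheory.tendsto_integral_filter_of_dominated_convergence
      (fun r => C₁ * C₂ * r ^ (2 * α - 2 * p) + C₁ * C₃ * r ^ (2 * α - p)) ?_ ?_ ?_ ?_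
    · filter_upwards [eventually_ge_atTop s] with T hT
      refine AEStronglyMeasurable.mul (AEStronglyMeasurable.mul ?_ ?_)
        (AEStronglyMeasurable.const_mul ?_ _)
      · exact Measurable.aestronglyMeasurable (by fun_prop)
      · exact aestronglyMeasurable_intervalIntegral_of_le (by fun_prop) le_rfl
      · exact aestronglyMeasurable_intervalIntegral_of_le (by fun_prop) hT
    · filter_upwards [hC₃, eventually_ge_atTop s] with T hT hsT
      refine ae_restrict_of_forall_mem measurableSet_Ioo fun r hr => ?_
      have hr0 : 0 < r := hr.1
      have hI0 := integral_rpow_mul_sub_rpow_nonneg (β := β) (γ := γ) hr0.le hr.2.le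
      have hJ0 : 0 ≤ ∫ t in r..T, Real.exp (θ * t) * t ^ β * (t - r) ^ γ :=
        integral_nonneg (hr.2.le.trans hsT) fun t ht => by
          have ht0 : 0 ≤ t := hr0.le.trans ht.1
          have htr : 0 ≤ t - r := sub_nonneg.2 ht.1
          positivity
      have hT0 : 0 ≤ T := by linarith
      have hI := hC₁ r hr
      have hJ := (hT r hr).trans (add_le_add_left (hC₂ r ⟨hr0, by linarith [hr.2]⟩) C₃)
      rw [Real.norm_of_nonneg (by positivity)]
      calc _ ≤ r ^ (2 * α) * (C₁ * r ^ (-p)) * (C₂ * r ^ (-p) + C₃) := by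
            refine mul_le_mul (mul_le_mul_of_nonneg_left hI (by positivity)) hJ (by positivity) ?_
            exact mul_nonneg (by positivity) (hI0.trans hI)
        _ = _ := by
            rw [show 2 * α - 2 * p = 2 * α + -p + -p by ring,
              show 2 * α - p = 2 * α + -p by ring, Real.rpow_add hr0, Real.rpow_add hr0]
            ring
    · refine Integrable.add (Integrable.const_mul ?_ _) (Integrable.const_mul ?_ _)
      · exact (integrableOn_Ioo_rpow_iff hs).2 (by linarith)
      · exact (integrableOn_Ioo_rpow_iff hs).2 (by linarith)
    · refine ae_restrict_of_forall_mem measurableSet_Ioo fun r hr => ?_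
      exact (tendsto_rpow_neg_mul_exp_mul_integral_kernel β hγ hθ hr).const_mul _
  refine key.congr' ?_
  filter_upwards [eventually_gt_atTop s] with T hT
  rw [hK T hT, intervalIntegral.integral_of_le hs.le, integral_Ioc_eq_integral_Ioo, ← mul_assoc,
    ← MeasureTheory.integral_const_mul]
  refine integral_congr_ae (.of_forall fun r => ?_)
  simp only
  ring
end

section
/- Let α, β, γ be real numbers with α > -1/2, γ > -1, α + β + γ > -3/2, and let θ > 0. Then (1/θ²) ∫₀^∞ s^{2α} (∫ₛ^∞ e^{−θt} t^β (t−s)^γ dt)² ds = (2 Γ(2α+2β+2γ+3) / θ^{2α+2β+2γ+5}) · ∫₀¹ ∫₀¹ z^{2α} (1−zx)^γ x^{2α+β+γ+1} (1−z)^γ (1+x)^{−(2α+2β+2γ+3)} dz dx, and both sides are finite. -/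
open MeasureTheory Filter

lemma measurable_lintegral_Iio_mul {g : ℝ → ENNReal} (hg : Measurable g) :
    Measurable fun t => ∫⁻ u in Set.Iio t, g t * g u := by
  have : ∀ t, ∫⁻ u in Set.Iio t, g t * g u =
      ∫⁻ u, {p : ℝ × ℝ | p.2 < p.1}.indicator (fun p => g p.1 * g p.2) (t, u) := fun t => by
    rw [← lintegral_indicator measurableSet_Iio]
    rfl
  simp_rw [this]
  exact (Measurable.indicator (by fun_prop)
    (measurableSet_lt measurable_snd measurable_fst)).lintegral_prod_right'

/-- The square of a Lebesgue integral as twice an integral over the region below the diagonal. -/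
lemma lintegral_sq_eq_two_mul_lintegral_Iio {g : ℝ → ENNReal} (hg : Measurable g) :
    (∫⁻ t, g t) ^ 2 = 2 * ∫⁻ t, ∫⁻ u in Set.Iio t, g t * g u := by
  have hle : MeasurableSet {p : ℝ × ℝ | p.1 ≤ p.2} := measurableSet_le measurable_fst measurable_snd
  have hsplit : ∀ t, ∫⁻ u, g t * g u =
      (∫⁻ u in Set.Iio t, g t * g u) + ∫⁻ u in Set.Ici t, g t * g u := fun t => by
    rw [← Set.compl_Iio, lintegral_add_compl _ measurableSet_Iio]
  have hupper : ∫⁻ t, ∫⁻ u in Set.Ici t, g t * g u = ∫⁻ t, ∫⁻ u in Set.Iio t, g t * g u := by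
    have h1 : ∀ t, ∫⁻ u in Set.Ici t, g t * g u =
        ∫⁻ u, {p : ℝ × ℝ | p.1 ≤ p.2}.indicator (fun p => g p.1 * g p.2) (t, u) := fun t => by
      rw [← lintegral_indicator measurableSet_Ici]
      rfl
    have h2 : ∀ u, ∫⁻ t, {p : ℝ × ℝ | p.1 ≤ p.2}.indicator (fun p => g p.1 * g p.2) (t, u) =
        ∫⁻ t in Set.Iio u, g u * g t := fun u => by
      rw [setLIntegral_congr Iio_ae_eq_Iic, ← lintegral_indicator measurableSet_Iic]
      simp_rw [mul_comm (g u)]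
      rfl
    simp_rw [h1]
    rw [lintegral_lintegral_swap]
    · simp_rw [h2]
    · exact (Measurable.indicator (by fun_prop) hle).aemeasurable
  calc (∫⁻ t, g t) ^ 2 = ∫⁻ t, ∫⁻ u, g t * g u := by
        simp_rw [lintegral_const_mul _ hg]
        rw [lintegral_mul_const _ hg, sq]
    _ = 2 * ∫⁻ t, ∫⁻ u in Set.Iio t, g t * g u := by
        simp_rw [hsplit]
        rw [lintegral_add_left (measurable_lintegral_Iio_mul hg), hupper, two_mul]

/-- Tonelli's theorem for the weighted squared norm of a Volterra kernel. -/
lemma lintegral_mul_sq_lintegral_Ioi {w : ℝ → ENNReal} {h : ℝ → ℝ → ENNReal} (hw : Measurable w)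
    (hh : Measurable (Function.uncurry h)) :
    ∫⁻ s in Set.Ioi 0, w s * (∫⁻ t in Set.Ioi s, h s t) ^ 2 =
      2 * ∫⁻ t in Set.Ioi 0, ∫⁻ u in Set.Ioo 0 t, ∫⁻ s in Set.Ioo 0 u,
        w s * (h s t * h s u) := by
  classical
  set F : ℝ → ℝ → ℝ → ENNReal := fun s t u =>
    if 0 < s ∧ s < u ∧ u < t then w s * (h s t * h s u) else 0 with hF
  have hFm : Measurable fun p : (ℝ × ℝ) × ℝ => F p.1.1 p.1.2 p.2 := by
    refine Measurable.ite ?_ ?_ measurable_const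
    · have h1 : Measurable fun p : (ℝ × ℝ) × ℝ => p.1.1 := by fun_prop
      have h2 : Measurable fun p : (ℝ × ℝ) × ℝ => p.1.2 := by fun_prop
      exact (measurableSet_lt measurable_const h1).inter
        ((measurableSet_lt h1 measurable_snd).inter (measurableSet_lt measurable_snd h2))
    · have h1 : Measurable fun p : (ℝ × ℝ) × ℝ => h p.1.1 p.1.2 :=
        hh.comp measurable_fst
      have h2 : Measurable fun p : (ℝ × ℝ) × ℝ => h p.1.1 p.2 :=
        hh.comp (by fun_prop : Measurable fun p : (ℝ × ℝ) × ℝ => (p.1.1, p.2))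
      fun_prop
  have hleft : ∀ s, (Set.Ioi 0).indicator (fun s => w s * (∫⁻ t in Set.Ioi s, h s t) ^ 2) s =
      2 * ∫⁻ t, ∫⁻ u, F s t u := by
    intro s
    by_cases hs : 0 < s
    · have hg : Measurable ((Set.Ioi s).indicator (h s)) :=
        (hh.comp (by fun_prop : Measurable fun t : ℝ => (s, t))).indicator measurableSet_Ioi
      rw [Set.indicator_of_mem (Set.mem_Ioi.2 hs), ← lintegral_indicator measurableSet_Ioi,
        lintegral_sq_eq_two_mul_lintegral_Iio hg, mul_left_comm, ← lintegral_const_mul'' _ ?_]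
      · congr 1
        refine lintegral_congr fun t => ?_
        rw [← lintegral_indicator measurableSet_Iio, ← lintegral_const_mul'' _ ?_]
        · refine lintegral_congr fun u => ?_
          by_cases hsu : s < u <;> by_cases hut : u < t
          · simp [hF, Set.indicator_apply, hs, hsu, hut, hsu.trans hut]
          all_goals simp [hF, Set.indicator_apply, hsu, hut]
        · exact ((hg.const_mul _).indicator measurableSet_Iio).aemeasurable
      · exact (measurable_lintegral_Iio_mul hg).aemeasurable
    · simp [hF, hs]
  have hright : ∀ t, (Set.Ioi 0).indicator (fun t => ∫⁻ u in Set.Ioo 0 t, ∫⁻ s in Set.Ioo 0 u,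
      w s * (h s t * h s u)) t = ∫⁻ u, ∫⁻ s, F s t u := by
    intro t
    have hinner : ∀ u, (Set.Ioo 0 t).indicator (fun u => ∫⁻ s in Set.Ioo 0 u,
        w s * (h s t * h s u)) u = ∫⁻ s, F s t u := by
      intro u
      by_cases hu : u ∈ Set.Ioo 0 t
      · rw [Set.indicator_of_mem hu, ← lintegral_indicator measurableSet_Ioo]
        refine lintegral_congr fun s => ?_
        simp [hF, Set.indicator_apply, hu.2]
      · rw [Set.indicator_of_notMem hu]
        symm
        refine (lintegral_congr fun s => if_neg ?_).trans lintegral_zero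
        rintro ⟨h1, h2, h3⟩
        exact hu ⟨h1.trans h2, h3⟩
    by_cases ht : 0 < t
    · rw [Set.indicator_of_mem (Set.mem_Ioi.2 ht), ← lintegral_indicator measurableSet_Ioo]
      exact lintegral_congr hinner
    · rw [Set.indicator_of_notMem (by simpa using ht)]
      simp_rw [← hinner, Set.Ioo_eq_empty ht]
      simp
  rw [← lintegral_indicator measurableSet_Ioi, ← lintegral_indicator measurableSet_Ioi]
  simp_rw [hleft, hright]
  rw [lintegral_const_mul' _ _ (by simp), lintegral_lintegral_swap]
  · congr 1
    refine lintegral_congr fun t => lintegral_lintegral_swap ?_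
    exact (hFm.comp (by fun_prop :
      Measurable fun p : ℝ × ℝ => (((p.1, t), p.2) : (ℝ × ℝ) × ℝ))).aemeasurable
  · exact hFm.lintegral_prod_right'.aemeasurable

lemma lintegral_Ioo_zero_eq_lintegral_Ioo_zero_one {t : ℝ} (ht : 0 < t) (g : ℝ → ENNReal) :
    ∫⁻ u in Set.Ioo 0 t, g u = ∫⁻ x in Set.Ioo 0 1, ENNReal.ofReal t * g (x * t) := by
  have himage : (fun x : ℝ => x * t) '' Set.Ioo 0 1 = Set.Ioo 0 t := by
    simpa using Set.image_mul_right_Ioo (0:ℝ) 1 ht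
  have hderiv : ∀ x ∈ Set.Ioo (0:ℝ) 1, HasDerivWithinAt (fun x => x * t) t (Set.Ioo 0 1) x :=
    fun x _ => (hasDerivAt_mul_const t).hasDerivWithinAt
  rw [← himage, lintegral_image_eq_lintegral_abs_deriv_mul measurableSet_Ioo hderiv
    (mul_left_injective₀ ht.ne').injOn, abs_of_pos ht]

lemma integrableOn_rpow_mul_one_sub_rpow {p q : ℝ} (hp : -1 < p) (hq : -1 < q) :
    IntegrableOn (fun x : ℝ => x ^ p * (1 - x) ^ q) (Set.Ioo 0 1) := by
  have h := Complex.betaIntegral_convergent (u := ((p + 1 : ℝ) : ℂ)) (v := ((q + 1 : ℝ) : ℂ))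
    (by rw [Complex.ofReal_re]; linarith) (by rw [Complex.ofReal_re]; linarith)
  rw [intervalIntegrable_iff_integrableOn_Ioo_of_le zero_le_one] at h
  refine IntegrableOn.congr_fun h.re (fun x hx => ?_) measurableSet_Ioo
  have h1 : (0:ℝ) ≤ 1 - x := by linarith [hx.2]
  have h2 : ((x : ℂ) ^ (((p + 1 : ℝ) : ℂ) - 1) * (1 - (x : ℂ)) ^ (((q + 1 : ℝ) : ℂ) - 1)) =
      ((x ^ p * (1 - x) ^ q : ℝ) : ℂ) := by
    rw [Complex.ofReal_mul, Complex.ofReal_cpow hx.1.le, Complex.ofReal_cpow h1]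
    push_cast
    simp
  simp only [h2, RCLike.re_to_complex, Complex.ofReal_re]

/-- The singularity of `(1 - z x) ^ γ (1 - z) ^ γ` at the corner `(1, 1)` is dominated by a product
of integrable powers of `1 - z` and `1 - x`. -/
lemma exists_rpow_mul_rpow_le {γ : ℝ} (hγ : -1 < γ) :
    ∃ c d : ℝ, -1 < c ∧ -1 < d ∧ ∀ x ∈ Set.Ioo (0:ℝ) 1, ∀ z ∈ Set.Ioo (0:ℝ) 1,
      (1 - z * x) ^ γ * (1 - z) ^ γ ≤ (1 - z) ^ c * (1 - x) ^ d := by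
  rcases le_or_gt 0 γ with h0 | h0
  · refine ⟨γ, 0, hγ, by norm_num, fun x hx z hz => ?_⟩
    have h1 : 0 ≤ 1 - z * x := by nlinarith [hx.1, hx.2, hz.1, hz.2]
    have h2 : 1 - z * x ≤ 1 := by nlinarith [hx.1, hz.1]
    rw [Real.rpow_zero, mul_one]
    exact mul_le_of_le_one_left (Real.rpow_nonneg (by linarith [hz.2]) _)
      (Real.rpow_le_one h1 h2 h0)
  · refine ⟨γ * (1 + γ) + γ, γ * (-γ), by nlinarith, by nlinarith, fun x hx z hz => ?_⟩
    have hx1 : 0 < 1 - x := by linarith [hx.2]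
    have hz1 : 0 < 1 - z := by linarith [hz.2]
    have hzx : 1 - z ≤ 1 - z * x := by nlinarith [hx.2, hz.1]
    have hxz : 1 - x ≤ 1 - z * x := by nlinarith [hx.1, hz.2]
    have hsplit : (1 - z * x) ^ γ = (1 - z * x) ^ (γ * (1 + γ)) * (1 - z * x) ^ (γ * (-γ)) := by
      rw [← Real.rpow_add (hz1.trans_le hzx)]
      congr 1
      ring
    rw [hsplit, Real.rpow_add hz1, mul_right_comm]
    refine mul_le_mul (mul_le_mul_of_nonneg_right ?_ (Real.rpow_nonneg hz1.le _)) ?_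
      (Real.rpow_nonneg (hz1.trans_le hzx).le _) (by positivity)
    · exact Real.rpow_le_rpow_of_nonpos hz1 hzx (by nlinarith)
    · exact Real.rpow_le_rpow_of_nonpos hx1 hxz (by nlinarith)

/-- The integrand of the double integral representing the second moment. -/
noncomputable def secondMomentDensity (α β γ x z : ℝ) : ℝ :=
  z ^ (2*α) * (1 - z * x) ^ γ * x ^ (2*α+β+γ+1) * (1 - z) ^ γ *
    (1 + x) ^ (-(2*α+2*β+2*γ+3))

lemma secondMomentDensity_nonneg (α β γ : ℝ) {x z : ℝ} (hx : x ∈ Set.Ioo (0:ℝ) 1)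
    (hz : z ∈ Set.Ioo (0:ℝ) 1) : 0 ≤ secondMomentDensity α β γ x z := by
  have hx0 := hx.1
  have hz0 := hz.1
  have h1 : 0 < 1 - z := by linarith [hz.2]
  have h2 : 0 < 1 - z * x := by nlinarith [hx.2]
  unfold secondMomentDensity
  positivity

lemma measurable_secondMomentDensity (α β γ : ℝ) :
    Measurable fun p : ℝ × ℝ => secondMomentDensity α β γ p.1 p.2 := by
  unfold secondMomentDensity
  fun_prop

lemma integrableOn_secondMomentDensity {α β γ : ℝ} (hα : -(1/2 : ℝ) < α) (hγ : -1 < γ)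
    (hαβγ : -(3/2 : ℝ) < α + β + γ) :
    IntegrableOn (fun p : ℝ × ℝ => secondMomentDensity α β γ p.1 p.2)
      (Set.Ioo (0:ℝ) 1 ×ˢ Set.Ioo (0:ℝ) 1) := by
  obtain ⟨c, d, hc, hd, hcd⟩ := exists_rpow_mul_rpow_le hγ
  have hbound : IntegrableOn (fun p : ℝ × ℝ =>
      (p.1 ^ (2*α+β+γ+1) * (1 - p.1) ^ d) * (p.2 ^ (2*α) * (1 - p.2) ^ c))
      (Set.Ioo (0:ℝ) 1 ×ˢ Set.Ioo (0:ℝ) 1) := by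
    rw [IntegrableOn, Measure.volume_eq_prod, ← Measure.prod_restrict]
    exact (integrableOn_rpow_mul_one_sub_rpow (by linarith) hd).mul_prod
      (integrableOn_rpow_mul_one_sub_rpow (by linarith) hc)
  refine Integrable.mono' hbound (measurable_secondMomentDensity α β γ).aestronglyMeasurable ?_
  refine (ae_restrict_iff' (measurableSet_Ioo.prod measurableSet_Ioo)).2
    (Eventually.of_forall fun p hp => ?_)
  obtain ⟨x, z⟩ := p
  obtain ⟨hx, hz⟩ : x ∈ Set.Ioo (0:ℝ) 1 ∧ z ∈ Set.Ioo (0:ℝ) 1 := hp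
  rw [Real.norm_of_nonneg (secondMomentDensity_nonneg α β γ hx hz)]
  have hone : (1 + x) ^ (-(2*α+2*β+2*γ+3)) ≤ 1 :=
    Real.rpow_le_one_of_one_le_of_nonpos (by linarith [hx.1]) (by linarith)
  have hx0 := hx.1
  have hz0 := hz.1
  have hx1 : 0 < 1 - x := by linarith [hx.2]
  have hz1 : 0 < 1 - z := by linarith [hz.2]
  calc secondMomentDensity α β γ x z
      = (x ^ (2*α+β+γ+1) * z ^ (2*α)) * ((1 - z * x) ^ γ * (1 - z) ^ γ) *
          (1 + x) ^ (-(2*α+2*β+2*γ+3)) := by unfold secondMomentDensity; ring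
    _ ≤ (x ^ (2*α+β+γ+1) * z ^ (2*α)) * ((1 - z) ^ c * (1 - x) ^ d) * 1 := by
        exact mul_le_mul (mul_le_mul_of_nonneg_left (hcd x hx z hz) (by positivity)) hone
          (by positivity) (by positivity)
    _ = _ := by ring

lemma lintegral_rpow_mul_exp_neg_mul_Ioi {a r : ℝ} (ha : 0 < a) (hr : 0 < r) :
    ∫⁻ t in Set.Ioi 0, ENNReal.ofReal (t ^ (a - 1) * Real.exp (-(r * t))) =
      ENNReal.ofReal ((1 / r) ^ a * Real.Gamma a) := by
  have hpos : 0 < (1 / r) ^ a * Real.Gamma a :=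
    mul_pos (by positivity) (Real.Gamma_pos_of_pos ha)
  rw [← Real.integral_rpow_mul_exp_neg_mul_Ioi ha hr, ofReal_integral_eq_lintegral_ofReal]
  · by_contra h
    rw [← Real.integral_rpow_mul_exp_neg_mul_Ioi ha hr, integral_undef h] at hpos
    exact hpos.false
  · exact (ae_restrict_iff' measurableSet_Ioi).2 (Eventually.of_forall fun t ht =>
      mul_nonneg (Real.rpow_nonneg (le_of_lt ht) _) (Real.exp_pos _).le)

/-- The Volterra integrand after the scaling `u = x t`, `s = z x t`. -/
lemma kernel_mul_kernel_scaled (α β γ θ : ℝ) {t x z : ℝ} (ht : 0 < t) (hx : x ∈ Set.Ioo (0:ℝ) 1)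
    (hz : z ∈ Set.Ioo (0:ℝ) 1) :
    t * ((x * t) * ((z * (x * t)) ^ (2*α) *
      ((Real.exp (-(θ * t)) * t ^ β * (t - z * (x * t)) ^ γ) *
        (Real.exp (-(θ * (x * t))) * (x * t) ^ β * (x * t - z * (x * t)) ^ γ)))) =
    (z ^ (2*α) * (1 - z * x) ^ γ * x ^ (2*α+β+γ+1) * (1 - z) ^ γ) *
      (t ^ (2*α+2*β+2*γ+3 - 1) * Real.exp (-(θ * (1 + x) * t))) := by
  have hx0 := hx.1
  have hz0 := hz.1
  have h1 : 0 < 1 - z := by linarith [hz.2]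
  have h2 : 0 < 1 - z * x := by nlinarith [hx.2]
  have ht' : t ^ (2*α+2*β+2*γ+3 - 1) = t ^ (2*α) * t ^ β * t ^ β * t ^ γ * t ^ γ * t * t := by
    rw [show 2*α+2*β+2*γ+3 - 1 = 2*α+β+β+γ+γ+1+1 by ring]
    simp only [Real.rpow_add ht, Real.rpow_one]
  have hx' : x ^ (2*α+β+γ+1) = x ^ (2*α) * x ^ β * x ^ γ * x := by
    simp only [Real.rpow_add hx0, Real.rpow_one]
  have he : Real.exp (-(θ * (1 + x) * t)) = Real.exp (-(θ * t)) * Real.exp (-(θ * (x * t))) := by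
    rw [← Real.exp_add]
    congr 1
    ring
  rw [show t - z * (x * t) = (1 - z * x) * t by ring,
    show x * t - z * (x * t) = (1 - z) * (x * t) by ring,
    Real.mul_rpow hz0.le (by positivity), Real.mul_rpow hx0.le ht.le,
    Real.mul_rpow h2.le ht.le, Real.mul_rpow h1.le (by positivity), Real.mul_rpow hx0.le ht.le,
    Real.mul_rpow hx0.le ht.le, ht', hx', he]
  ring

lemma lintegral_secondMoment {α β γ θ : ℝ} (hαβγ : -(3/2 : ℝ) < α + β + γ) (hθ : 0 < θ) :
    ∫⁻ s in Set.Ioi (0:ℝ), ENNReal.ofReal (s ^ (2*α)) *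
      (∫⁻ t in Set.Ioi s, ENNReal.ofReal (Real.exp (-(θ * t)) * t ^ β * (t - s) ^ γ)) ^ 2 =
    2 * (ENNReal.ofReal (Real.Gamma (2*α+2*β+2*γ+3) / θ ^ (2*α+2*β+2*γ+3)) *
      ∫⁻ x in Set.Ioo (0:ℝ) 1, ∫⁻ z in Set.Ioo (0:ℝ) 1,
        ENNReal.ofReal (secondMomentDensity α β γ x z)) := by
  have ha : 0 < 2*α+2*β+2*γ+3 := by linarith
  have hw : Measurable fun s : ℝ => ENNReal.ofReal (s ^ (2*α)) := by fun_prop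
  have hh : Measurable (Function.uncurry fun s t : ℝ =>
      ENNReal.ofReal (Real.exp (-(θ * t)) * t ^ β * (t - s) ^ γ)) := by
    unfold Function.uncurry
    fun_prop
  rw [lintegral_mul_sq_lintegral_Ioi hw hh]
  congr 1
  set ψ : ℝ → ℝ → ℝ := fun x z => z ^ (2*α) * (1 - z * x) ^ γ * x ^ (2*α+β+γ+1) * (1 - z) ^ γ
    with hψ
  have hψm : Measurable fun p : ℝ × ℝ => ψ p.1 p.2 := by
    simp only [hψ]
    fun_prop
  have hψ0 : ∀ x ∈ Set.Ioo (0:ℝ) 1, ∀ z ∈ Set.Ioo (0:ℝ) 1, 0 ≤ ψ x z := fun x hx z hz => by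
    have hx0 := hx.1
    have hz0 := hz.1
    have h1 : 0 < 1 - z := by linarith [hz.2]
    have h2 : 0 < 1 - z * x := by nlinarith [hx.2]
    simp only [hψ]
    positivity
  set E : ℝ → ℝ → ℝ := fun t x => t ^ (2*α+2*β+2*γ+3 - 1) * Real.exp (-(θ * (1 + x) * t)) with hE
  have hEm : Measurable fun p : ℝ × ℝ => E p.1 p.2 := by
    simp only [hE]
    fun_prop
  have hscale : ∀ t ∈ Set.Ioi (0:ℝ), ∫⁻ u in Set.Ioo 0 t, ∫⁻ s in Set.Ioo 0 u,
      ENNReal.ofReal (s ^ (2*α)) *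
        (ENNReal.ofReal (Real.exp (-(θ * t)) * t ^ β * (t - s) ^ γ) *
          ENNReal.ofReal (Real.exp (-(θ * u)) * u ^ β * (u - s) ^ γ)) =
      ∫⁻ x in Set.Ioo (0:ℝ) 1, ∫⁻ z in Set.Ioo (0:ℝ) 1,
        ENNReal.ofReal (ψ x z) * ENNReal.ofReal (E t x) := by
    intro t ht
    have ht : 0 < t := ht
    rw [lintegral_Ioo_zero_eq_lintegral_Ioo_zero_one ht]
    refine setLIntegral_congr_fun measurableSet_Ioo fun x hx => ?_
    have hx0 := hx.1
    rw [lintegral_Ioo_zero_eq_lintegral_Ioo_zero_one (mul_pos hx.1 ht),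
      ← lintegral_const_mul' _ _ ENNReal.ofReal_ne_top]
    refine setLIntegral_congr_fun measurableSet_Ioo fun z hz => ?_
    have hz0 := hz.1
    have h1 : 0 ≤ t - z * (x * t) := by
      have : z * x ≤ 1 := by nlinarith [hx.2, hz.2]
      nlinarith
    rw [← ENNReal.ofReal_mul (hψ0 x hx z hz), ← kernel_mul_kernel_scaled α β γ θ ht hx hz,
      ENNReal.ofReal_mul ht.le, ENNReal.ofReal_mul (by positivity : 0 ≤ x * t),
      ENNReal.ofReal_mul (by positivity : 0 ≤ (z * (x * t)) ^ (2*α)),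
      ENNReal.ofReal_mul (by positivity :
        0 ≤ Real.exp (-(θ * t)) * t ^ β * (t - z * (x * t)) ^ γ)]
  rw [setLIntegral_congr_fun measurableSet_Ioi hscale, lintegral_lintegral_swap,
    ← lintegral_const_mul' _ _ ENNReal.ofReal_ne_top]
  · refine setLIntegral_congr_fun measurableSet_Ioo fun x hx => ?_
    rw [lintegral_lintegral_swap, ← lintegral_const_mul' _ _ ENNReal.ofReal_ne_top]
    · refine setLIntegral_congr_fun measurableSet_Ioo fun z hz => ?_
      have hx1 : 0 < 1 + x := by linarith [hx.1]
      have hΓ := Real.Gamma_pos_of_pos ha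
      rw [lintegral_const_mul' _ _ ENNReal.ofReal_ne_top,
        lintegral_rpow_mul_exp_neg_mul_Ioi ha (mul_pos hθ hx1),
        ← ENNReal.ofReal_mul (hψ0 x hx z hz), ← ENNReal.ofReal_mul (by positivity)]
      congr 1
      simp only [hψ]
      rw [secondMomentDensity, Real.rpow_neg hx1.le, Real.div_rpow zero_le_one (by positivity),
        Real.mul_rpow hθ.le hx1.le, Real.one_rpow]
      field_simp
    · refine Measurable.aemeasurable ?_
      have h1 : Measurable fun p : ℝ × ℝ => ψ x p.2 := hψm.comp (by fun_prop :
        Measurable fun p : ℝ × ℝ => (x, p.2))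
      have h2 : Measurable fun p : ℝ × ℝ => E p.1 x := hEm.comp (by fun_prop :
        Measurable fun p : ℝ × ℝ => (p.1, x))
      exact h1.ennreal_ofReal.mul h2.ennreal_ofReal
  · have h1 : Measurable fun p : (ℝ × ℝ) × ℝ => ψ p.1.2 p.2 := hψm.comp (by fun_prop :
      Measurable fun p : (ℝ × ℝ) × ℝ => (p.1.2, p.2))
    have h2 : Measurable fun p : (ℝ × ℝ) × ℝ => E p.1.1 p.1.2 := hEm.comp measurable_fst
    exact (h1.ennreal_ofReal.mul h2.ennreal_ofReal).lintegral_prod_right'.aemeasurable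

/-- Remark 4.9: the formula for the second moment `E η_∞²`, where
`η_∞ = ∫₀^∞ e^{-θs} X_s ds`, together with the finiteness of both sides. -/
theorem stmt_19 (α β γ θ : ℝ) (hα : -(1/2 : ℝ) < α) (hγ : -1 < γ)
    (hαβγ : -(3/2 : ℝ) < α + β + γ) (hθ : 0 < θ) :
    IntegrableOn (fun s : ℝ => s ^ (2*α) *
      (∫ t in Set.Ioi s, Real.exp (-(θ * t)) * t ^ β * (t - s) ^ γ) ^ 2)
      (Set.Ioi (0:ℝ)) ∧
    IntegrableOn (fun p : ℝ × ℝ => p.2 ^ (2*α) * (1 - p.2 * p.1) ^ γ *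
      p.1 ^ (2*α+β+γ+1) * (1 - p.2) ^ γ * (1 + p.1) ^ (-(2*α+2*β+2*γ+3)))
      (Set.Ioo (0:ℝ) 1 ×ˢ Set.Ioo (0:ℝ) 1) ∧
    (1 / θ ^ (2 : ℕ)) * (∫ s in Set.Ioi (0:ℝ), s ^ (2*α) *
      (∫ t in Set.Ioi s, Real.exp (-(θ * t)) * t ^ β * (t - s) ^ γ) ^ 2)
    = (2 * Real.Gamma (2*α+2*β+2*γ+3) / θ ^ (2*α+2*β+2*γ+5)) *
      ∫ x in Set.Ioo (0:ℝ) 1, ∫ z in Set.Ioo (0:ℝ) 1,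
        z ^ (2*α) * (1 - z * x) ^ γ * x ^ (2*α+β+γ+1) * (1 - z) ^ γ *
          (1 + x) ^ (-(2*α+2*β+2*γ+3)) := by
  have ha : 0 < 2*α+2*β+2*γ+3 := by linarith
  have hΓ := Real.Gamma_pos_of_pos ha
  have hint := integrableOn_secondMomentDensity hα hγ hαβγ
  set a := 2*α+2*β+2*γ+3 with haa
  set J : ℝ := ∫ x in Set.Ioo (0:ℝ) 1, ∫ z in Set.Ioo (0:ℝ) 1, secondMomentDensity α β γ x z
    with hJ
  have hJ0 : 0 ≤ J := setIntegral_nonneg measurableSet_Ioo fun x hx =>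
    setIntegral_nonneg measurableSet_Ioo fun z hz => secondMomentDensity_nonneg α β γ hx hz
  have hJl : ∫⁻ x in Set.Ioo (0:ℝ) 1, ∫⁻ z in Set.Ioo (0:ℝ) 1,
      ENNReal.ofReal (secondMomentDensity α β γ x z) = ENNReal.ofReal J := by
    rw [hJ, ← setIntegral_prod (fun p : ℝ × ℝ => secondMomentDensity α β γ p.1 p.2) hint,
      ← Measure.volume_eq_prod, ofReal_integral_eq_lintegral_ofReal hint, Measure.volume_eq_prod,
      ← Measure.prod_restrict, lintegral_prod]
    · exact (measurable_secondMomentDensity α β γ).ennreal_ofReal.aemeasurable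
    · exact (ae_restrict_iff' (measurableSet_Ioo.prod measurableSet_Ioo)).2
        (Eventually.of_forall fun p hp => secondMomentDensity_nonneg α β γ hp.1 hp.2)
  have hA : ∫⁻ s in Set.Ioi (0:ℝ), ENNReal.ofReal (s ^ (2*α)) *
      (∫⁻ t in Set.Ioi s, ENNReal.ofReal (Real.exp (-(θ * t)) * t ^ β * (t - s) ^ γ)) ^ 2 =
      ENNReal.ofReal (2 * (Real.Gamma a / θ ^ a * J)) := by
    rw [lintegral_secondMoment hαβγ hθ, hJl, ← haa, ← ENNReal.ofReal_mul (by positivity),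
      ENNReal.ofReal_mul zero_le_two, ENNReal.ofReal_ofNat]
  set G : ℝ → ENNReal := fun s =>
    ∫⁻ t in Set.Ioi s, ENNReal.ofReal (Real.exp (-(θ * t)) * t ^ β * (t - s) ^ γ) with hG
  have hGm : Measurable G := by
    have hGi : ∀ s, G s = ∫⁻ t, {p : ℝ × ℝ | p.1 < p.2}.indicator (fun p =>
        ENNReal.ofReal (Real.exp (-(θ * p.2)) * p.2 ^ β * (p.2 - p.1) ^ γ)) (s, t) := fun s => by
      simp only [hG]
      rw [← lintegral_indicator measurableSet_Ioi]
      rfl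
    rw [funext hGi]
    exact (Measurable.indicator (by fun_prop)
      (measurableSet_lt measurable_fst measurable_snd)).lintegral_prod_right'
  have hFG : ∀ s ∈ Set.Ioi (0:ℝ),
      s ^ (2*α) * (∫ t in Set.Ioi s, Real.exp (-(θ * t)) * t ^ β * (t - s) ^ γ) ^ 2 =
        (ENNReal.ofReal (s ^ (2*α)) * G s ^ 2).toReal := by
    intro s hs
    have hs : 0 < s := hs
    rw [integral_eq_lintegral_of_nonneg_ae, ENNReal.toReal_mul, ENNReal.toReal_pow,
      ENNReal.toReal_ofReal (Real.rpow_nonneg hs.le _)]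
    · refine (ae_restrict_iff' measurableSet_Ioi).2 (Eventually.of_forall fun t ht => ?_)
      have ht : s < t := ht
      have h1 : 0 < t - s := sub_pos.2 ht
      have h2 : 0 < t := hs.trans ht
      simp only [Pi.zero_apply]
      positivity
    · exact Measurable.aestronglyMeasurable (by fun_prop)
  have hm : Measurable fun s => ENNReal.ofReal (s ^ (2*α)) * G s ^ 2 := by fun_prop
  have hfin : ∫⁻ s in Set.Ioi (0:ℝ), ENNReal.ofReal (s ^ (2*α)) * G s ^ 2 ≠ ⊤ :=
    hA ▸ ENNReal.ofReal_ne_top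
  refine ⟨?_, hint, ?_⟩
  · exact (integrable_toReal_of_lintegral_ne_top hm.aemeasurable hfin).congr
      ((ae_restrict_iff' measurableSet_Ioi).2 (Eventually.of_forall fun s hs => (hFG s hs).symm))
  · rw [setIntegral_congr_fun measurableSet_Ioi hFG,
      integral_toReal hm.aemeasurable (ae_lt_top hm hfin), hA, ENNReal.toReal_ofReal (by positivity)]
    have hexp : θ ^ (2*α+2*β+2*γ+5) = θ ^ a * θ ^ 2 := by
      rw [← Real.rpow_natCast θ 2, ← Real.rpow_add hθ]
      congr 1
      rw [haa]
      push_cast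
      ring
    rw [hexp]
    change _ = _ * J
    field_simp
end
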